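/- Let d ≥ 1 and let n ≥ 1, k ≥ 1 be natural numbers with n > d or k > d. Then pB(n,k)_{≤d} = ∑ C(n; n_1, n_2) · C(k; k_1, k_2) · pB(n − (n_1+n_2), k − (k_1+k_2))_{≤d}, where the sum is over all n_1, n_2, k_1, k_2 ∈ {1, 2, …, d}, C(n; n_1, n_2) = n!/(n_1! n_2! (n−n_1−n_2)!) denotes the multinomial coefficient, and any summand with n_1 + n_2 > n or k_1 + k_2 > k is taken to be 0. -/

import Mathlib

open Finset

/-- A 01 matrix (encoded with `Bool` entries) is lonesum iff it avoids the
two 2×2 permutation submatrices. -/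
def Lonesum {n k : ℕ} (M : Fin n → Fin k → Bool) : Prop :=
  ∀ i i' : Fin n, ∀ j j' : Fin k, i < i' → j < j' →
    ¬(M i j = true ∧ M i j' = false ∧ M i' j = false ∧ M i' j' = true) ∧
    ¬(M i j = false ∧ M i j' = true ∧ M i' j = true ∧ M i' j' = false)

/-- The `j`-th column of a 01 matrix. -/
def colOf {n k : ℕ} (M : Fin n → Fin k → Bool) (j : Fin k) : Fin n → Bool :=
  fun i => M i j

/-- The `i`-th row of a 01 matrix. -/
def rowOf {n k : ℕ} (M : Fin n → Fin k → Bool) (i : Fin n) : Fin k → Bool :=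
  fun j => M i j

/-- `pB(n,k)_{≤d}`: the number of `n × k` lonesum 01 matrices with no all-zero
column and no all-zero row, in which every column vector occurs at most `d`
times among the columns and every row vector occurs at most `d` times among
the rows. -/
noncomputable def pB (n k d : ℕ) : ℕ :=
  Nat.card {M : Fin n → Fin k → Bool // Lonesum M ∧
    (∀ j, ∃ i, M i j = true) ∧ (∀ i, ∃ j, M i j = true) ∧
    (∀ j, (univ.filter fun j' => colOf M j' = colOf M j).card ≤ d) ∧
    (∀ i, (univ.filter fun i' => rowOf M i' = rowOf M i).card ≤ d)}


/-- The matrices counted by `pB`, over arbitrary index types. -/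
structure RestrictedLonesum {α β : Type*} (d : ℕ) (M : α → β → Bool) : Prop where
  exchange : ∀ i i' j j', M i j = true → M i' j' = true → M i j' = true ∨ M i' j = true
  col_ne_zero : ∀ j, ∃ i, M i j = true
  row_ne_zero : ∀ i, ∃ j, M i j = true
  ncard_col_le : ∀ j, {j' | ∀ i, M i j' = M i j}.ncard ≤ d
  ncard_row_le : ∀ i, {i' | ∀ j, M i' j = M i j}.ncard ≤ d

/-- `A` is the set of all-one rows of `M`, and `B` is the set of columns supported on `A`. -/
def IsTopBlock {α β : Type*} (M : α → β → Bool) (A : Finset α) (B : Finset β) : Prop :=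
  (∀ i, i ∈ A ↔ ∀ j, M i j = true) ∧ ∀ j, j ∈ B ↔ ∀ i, M i j = true → i ∈ A

/-- The matrix with all-one rows on `A`, zero on `B` outside `A`, and equal to `N` elsewhere. -/
def extendBlock {α β : Type*} [DecidableEq α] [DecidableEq β] (A : Finset α) (B : Finset β)
    (N : {i // i ∉ A} → {j // j ∉ B} → Bool) : α → β → Bool :=
  fun i j => if hi : i ∈ A then true else if hj : j ∈ B then false else N ⟨i, hi⟩ ⟨j, hj⟩

lemma lonesum_iff_exchange {n k : ℕ} (M : Fin n → Fin k → Bool) :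
    Lonesum M ↔
      ∀ i i' j j', M i j = true → M i' j' = true → M i j' = true ∨ M i' j = true := by
  constructor
  · intro h i i' j j' h1 h2
    by_contra! hc
    obtain ⟨h3, h4⟩ := hc
    rw [ne_eq, Bool.not_eq_true] at h3 h4
    rcases lt_trichotomy i i' with hi | rfl | hi
    · rcases lt_trichotomy j j' with hj | rfl | hj
      · exact (h i i' j j' hi hj).1 ⟨h1, h3, h4, h2⟩
      · simp_all
      · exact (h i i' j' j hi hj).2 ⟨h3, h1, h2, h4⟩
    · simp_all
    · rcases lt_trichotomy j j' with hj | rfl | hj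
      · exact (h i' i j j' hi hj).2 ⟨h4, h2, h1, h3⟩
      · simp_all
      · exact (h i' i j' j hi hj).1 ⟨h2, h4, h3, h1⟩
  · intro h i i' j j' _ _
    constructor
    · rintro ⟨h1, h2, h3, h4⟩
      simpa [h2, h3] using h i i' j j' h1 h4
    · rintro ⟨h1, h2, h3, h4⟩
      simpa [h1, h4] using h i i' j' j h2 h3

lemma pB_eq_card (n k d : ℕ) :
    pB n k d = Nat.card {M : Fin n → Fin k → Bool // RestrictedLonesum d M} := by
  refine Nat.card_congr (Equiv.subtypeEquivRight fun M => ?_)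
  have hcol : ∀ j, (univ.filter fun j' => colOf M j' = colOf M j).card =
      {j' | ∀ i, M i j' = M i j}.ncard := fun j => by
    rw [← Set.ncard_coe_finset]
    congr 1
    ext j'
    simp [colOf, funext_iff]
  have hrow : ∀ i, (univ.filter fun i' => rowOf M i' = rowOf M i).card =
      {i' | ∀ j, M i' j = M i j}.ncard := fun i => by
    rw [← Set.ncard_coe_finset]
    congr 1
    ext i'
    simp [rowOf, funext_iff]
  simp only [lonesum_iff_exchange, hcol, hrow]
  exact ⟨fun ⟨a, b, c, e, f⟩ => ⟨a, b, c, e, f⟩, fun ⟨a, b, c, e, f⟩ => ⟨a, b, c, e, f⟩⟩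

lemma RestrictedLonesum.reindex {α β α' β' : Type*} {d : ℕ} {M : α → β → Bool}
    (h : RestrictedLonesum d M) (e : α' ≃ α) (f : β' ≃ β) :
    RestrictedLonesum d (fun i j => M (e i) (f j)) where
  exchange i i' j j' := h.exchange _ _ _ _
  col_ne_zero j := by
    obtain ⟨i, hi⟩ := h.col_ne_zero (f j)
    exact ⟨e.symm i, by simpa using hi⟩
  row_ne_zero i := by
    obtain ⟨j, hj⟩ := h.row_ne_zero (e i)
    exact ⟨f.symm j, by simpa using hj⟩
  ncard_col_le j := by
    refine le_of_eq_of_le ?_ (h.ncard_col_le (f j))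
    rw [← Set.ncard_image_of_injective _ f.injective]
    congr 1
    ext j'
    simp [Equiv.image_eq_preimage_symm, e.forall_congr_left]
  ncard_row_le i := by
    refine le_of_eq_of_le ?_ (h.ncard_row_le (e i))
    rw [← Set.ncard_image_of_injective _ e.injective]
    congr 1
    ext i'
    simp [Equiv.image_eq_preimage_symm, f.forall_congr_left]

lemma card_restrictedLonesum {α β : Type*} [Fintype α] [Fintype β] (d : ℕ) :
    Nat.card {M : α → β → Bool // RestrictedLonesum d M} =
      pB (Fintype.card α) (Fintype.card β) d := by
  rw [pB_eq_card]
  let e := Fintype.equivFin α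
  let f := Fintype.equivFin β
  refine Nat.card_congr
    { toFun := fun M => ⟨_, M.2.reindex e.symm f.symm⟩
      invFun := fun M => ⟨_, M.2.reindex e f⟩
      left_inv := fun M => by simp
      right_inv := fun M => by simp }

section TopBlock

variable {α β : Type*} {d : ℕ} {M : α → β → Bool} {A : Finset α} {B : Finset β}

lemma RestrictedLonesum.left_nonempty [Finite α] [Nonempty α] (h : RestrictedLonesum d M)
    (hM : IsTopBlock M A B) : A.Nonempty := by
  obtain ⟨i, -, hi⟩ := Set.finite_univ.exists_maximalFor
    (fun i => {j | M i j = true}) (Set.univ : Set α) Set.univ_nonempty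
  refine ⟨i, (hM.1 i).2 fun j => ?_⟩
  obtain ⟨i', hi'⟩ := h.col_ne_zero j
  by_contra hj
  refine hj (hi (Set.mem_univ i') (fun j' hj' => ?_) hi')
  exact (h.exchange i i' j' j hj' hi').resolve_left hj

lemma RestrictedLonesum.right_nonempty [Finite β] [Nonempty β] (h : RestrictedLonesum d M)
    (hM : IsTopBlock M A B) : B.Nonempty := by
  obtain ⟨j, -, hj⟩ := Set.finite_univ.exists_minimalFor
    (fun j => {i | M i j = true}) (Set.univ : Set β) Set.univ_nonempty
  refine ⟨j, (hM.2 j).2 fun i hi => (hM.1 i).2 fun j' => ?_⟩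
  by_contra hj'
  refine hj' (hj (Set.mem_univ j') (fun i' hi' => ?_) hi)
  exact (h.exchange i i' j j' hi hi').resolve_left hj'

lemma IsTopBlock.ncard_row (hM : IsTopBlock M A B) {i : α} (hi : i ∈ A) :
    {i' | ∀ j, M i' j = M i j}.ncard = A.card := by
  rw [← Set.ncard_coe_finset]
  congr 1
  ext i'
  simp [hM.1 i', (hM.1 i).1 hi]

lemma IsTopBlock.apply_iff (hM : IsTopBlock M A B) {j : β} (hj : j ∈ B) (i : α) :
    M i j = true ↔ i ∈ A :=
  ⟨(hM.2 j).1 hj i, fun hi => (hM.1 i).1 hi j⟩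

lemma IsTopBlock.ncard_col (hM : IsTopBlock M A B) {j : β} (hj : j ∈ B) :
    {j' | ∀ i, M i j' = M i j}.ncard = B.card := by
  rw [← Set.ncard_coe_finset]
  congr 1
  ext j'
  refine ⟨fun h => (hM.2 j').2 fun i hi => ?_, fun h i => ?_⟩
  · rwa [h i, hM.apply_iff hj] at hi
  · rw [Bool.eq_iff_iff, hM.apply_iff hj, hM.apply_iff h]

lemma IsTopBlock.ncard_row_compl (hM : IsTopBlock M A B) (i : {i // i ∉ A}) :
    {i' : {i // i ∉ A} | ∀ j : {j // j ∉ B}, M i' j = M i j}.ncard =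
      {i' | ∀ j, M i' j = M i j}.ncard := by
  rw [← Set.ncard_image_of_injective _ Subtype.val_injective]
  congr 1
  ext i'
  simp only [Set.mem_image, Set.mem_ofPred_eq, Subtype.exists, exists_and_right, exists_eq_right]
  constructor
  · rintro ⟨hi', h⟩ j
    by_cases hj : j ∈ B
    · rw [Bool.eq_iff_iff, hM.apply_iff hj, hM.apply_iff hj]
      simp [hi', i.2]
    · exact h ⟨j, hj⟩
  · exact fun h => ⟨fun hi' => i.2 ((hM.1 _).2 fun j => h j ▸ (hM.1 i').1 hi' j), fun j => h j⟩

lemma IsTopBlock.ncard_col_compl (hM : IsTopBlock M A B) (j : {j // j ∉ B}) :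
    {j' : {j // j ∉ B} | ∀ i : {i // i ∉ A}, M i j' = M i j}.ncard =
      {j' | ∀ i, M i j' = M i j}.ncard := by
  rw [← Set.ncard_image_of_injective _ Subtype.val_injective]
  congr 1
  ext j'
  simp only [Set.mem_image, Set.mem_ofPred_eq, Subtype.exists, exists_and_right, exists_eq_right]
  constructor
  · rintro ⟨hj', h⟩ i
    by_cases hi : i ∈ A
    · rw [(hM.1 i).1 hi, (hM.1 i).1 hi]
    · exact h ⟨i, hi⟩
  · exact fun h => ⟨fun hj' => j.2 ((hM.2 _).2 fun i hi => (hM.2 j').1 hj' i (h i ▸ hi)),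
      fun i => h i⟩

lemma RestrictedLonesum.card_left_le [Finite α] [Nonempty α] (h : RestrictedLonesum d M)
    (hM : IsTopBlock M A B) : A.card ≤ d := by
  obtain ⟨i, hi⟩ := h.left_nonempty hM
  exact hM.ncard_row hi ▸ h.ncard_row_le i

lemma RestrictedLonesum.card_right_le [Finite β] [Nonempty β] (h : RestrictedLonesum d M)
    (hM : IsTopBlock M A B) : B.card ≤ d := by
  obtain ⟨j, hj⟩ := h.right_nonempty hM
  exact hM.ncard_col hj ▸ h.ncard_col_le j

lemma RestrictedLonesum.restrict (h : RestrictedLonesum d M) (hM : IsTopBlock M A B) :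
    RestrictedLonesum d (fun (i : {i // i ∉ A}) (j : {j // j ∉ B}) => M i j) where
  exchange i i' j j' := h.exchange _ _ _ _
  col_ne_zero j := by
    have := j.2
    simp only [hM.2, not_forall] at this
    obtain ⟨i, hi, hA⟩ := this
    exact ⟨⟨i, hA⟩, hi⟩
  row_ne_zero i := by
    obtain ⟨j, hj⟩ := h.row_ne_zero i
    exact ⟨⟨j, fun hB => i.2 ((hM.2 j).1 hB i hj)⟩, hj⟩
  ncard_col_le j := hM.ncard_col_compl j ▸ h.ncard_col_le j
  ncard_row_le i := hM.ncard_row_compl i ▸ h.ncard_row_le i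

variable [DecidableEq α] [DecidableEq β]

lemma extendBlock_coe (N : {i // i ∉ A} → {j // j ∉ B} → Bool) (i : {i // i ∉ A})
    (j : {j // j ∉ B}) : extendBlock A B N i j = N i j := by
  simp [extendBlock, i.2, j.2]

lemma extendBlock_restrict (hM : IsTopBlock M A B) :
    extendBlock A B (fun i j => M i j) = M := by
  ext i j
  unfold extendBlock
  split_ifs with hi hj
  · rw [(hM.1 i).1 hi]
  · rw [Bool.eq_iff_iff, hM.apply_iff hj]
    simp [hi]
  · rfl

lemma RestrictedLonesum.isTopBlock_extendBlock {N : {i // i ∉ A} → {j // j ∉ B} → Bool}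
    (h : RestrictedLonesum d N) (hB : B.Nonempty) : IsTopBlock (extendBlock A B N) A B := by
  refine ⟨fun i => ⟨fun hi j => by simp [extendBlock, hi], fun hi => ?_⟩,
    fun j => ⟨fun hj i hi => ?_, fun hj => ?_⟩⟩
  · obtain ⟨j, hj⟩ := hB
    by_contra hA
    simpa [extendBlock, hA, hj] using hi j
  · by_contra hA
    simp [extendBlock, hA, hj] at hi
  · by_contra hB
    obtain ⟨i, hi⟩ := h.col_ne_zero ⟨j, hB⟩
    exact i.2 (hj i (by rwa [← extendBlock_coe N] at hi))

lemma RestrictedLonesum.extendBlock {N : {i // i ∉ A} → {j // j ∉ B} → Bool}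
    (h : RestrictedLonesum d N) (hA : A.Nonempty) (hB : B.Nonempty) (hAd : A.card ≤ d)
    (hBd : B.card ≤ d) : RestrictedLonesum d (extendBlock A B N) := by
  have hM := h.isTopBlock_extendBlock hB
  refine ⟨fun i i' j j' h1 h2 => ?_, fun j => ?_, fun i => ?_, fun j => ?_, fun i => ?_⟩
  · by_cases hi : i ∈ A
    · exact Or.inl ((hM.1 i).1 hi j')
    by_cases hi' : i' ∈ A
    · exact Or.inr ((hM.1 i').1 hi' j)
    have hj : j ∉ B := fun hj => hi ((hM.2 j).1 hj i h1)
    have hj' : j' ∉ B := fun hj => hi' ((hM.2 j').1 hj i' h2)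
    have := h.exchange ⟨i, hi⟩ ⟨i', hi'⟩ ⟨j, hj⟩ ⟨j', hj'⟩
    simp only [← extendBlock_coe N] at this
    exact this h1 h2
  · obtain ⟨i, hi⟩ := hA
    exact ⟨i, (hM.1 i).1 hi j⟩
  · by_cases hi : i ∈ A
    · obtain ⟨j, hj⟩ := hB
      exact ⟨j, (hM.1 i).1 hi j⟩
    · obtain ⟨j, hj⟩ := h.row_ne_zero ⟨i, hi⟩
      exact ⟨j, by rwa [← extendBlock_coe N] at hj⟩
  · by_cases hj : j ∈ B
    · rwa [hM.ncard_col hj]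
    · rw [← hM.ncard_col_compl ⟨j, hj⟩]
      have := h.ncard_col_le ⟨j, hj⟩
      simp only [← extendBlock_coe N] at this
      exact this
  · by_cases hi : i ∈ A
    · rwa [hM.ncard_row hi]
    · rw [← hM.ncard_row_compl ⟨i, hi⟩]
      have := h.ncard_row_le ⟨i, hi⟩
      simp only [← extendBlock_coe N] at this
      exact this

/-- Matrices with prescribed top block correspond to matrices on the complement. -/
def topBlockEquiv (hA : A.Nonempty) (hB : B.Nonempty) (hAd : A.card ≤ d) (hBd : B.card ≤ d) :
    {M : α → β → Bool // RestrictedLonesum d M ∧ IsTopBlock M A B} ≃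
      {N : {i // i ∉ A} → {j // j ∉ B} → Bool // RestrictedLonesum d N} where
  toFun M := ⟨_, M.2.1.restrict M.2.2⟩
  invFun N := ⟨_, N.2.extendBlock hA hB hAd hBd, N.2.isTopBlock_extendBlock hB⟩
  left_inv M := Subtype.ext (extendBlock_restrict M.2.2)
  right_inv N := Subtype.ext (funext₂ (extendBlock_coe N.1))

end TopBlock

lemma card_topBlock {n k d : ℕ} (A : Finset (Fin n)) (B : Finset (Fin k))
    (hA : A.card ∈ Icc 1 d) (hB : B.card ∈ Icc 1 d) :
    Nat.card {M : Fin n → Fin k → Bool // RestrictedLonesum d M ∧ IsTopBlock M A B} =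
      pB (n - A.card) (k - B.card) d := by
  rw [mem_Icc] at hA hB
  rw [Nat.card_congr (topBlockEquiv (card_pos.1 hA.1) (card_pos.1 hB.1) hA.2 hB.2),
    card_restrictedLonesum]
  simp

lemma existsUnique_isTopBlock {α β : Type*} [Fintype α] [Fintype β] (M : α → β → Bool) :
    ∃! p : Finset α × Finset β, IsTopBlock M p.1 p.2 := by
  classical
  refine ⟨(univ.filter fun i => ∀ j, M i j = true,
    univ.filter fun j => ∀ i, M i j = true → ∀ j, M i j = true), ?_, ?_⟩
  · constructor <;> simp
  · rintro ⟨A, B⟩ ⟨h1, h2⟩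
    ext <;> simp_all

lemma pB_eq_sum_finset {n k d : ℕ} (hn : 1 ≤ n) (hk : 1 ≤ k) :
    pB n k d = ∑ A : Finset (Fin n) with A.card ∈ Icc 1 d,
      ∑ B : Finset (Fin k) with B.card ∈ Icc 1 d, pB (n - A.card) (k - B.card) d := by
  classical
  have : Nonempty (Fin n) := ⟨⟨0, hn⟩⟩
  have : Nonempty (Fin k) := ⟨⟨0, hk⟩⟩
  choose t ht htu using fun M : Fin n → Fin k → Bool => existsUnique_isTopBlock M
  have ht' : ∀ M A B, t M = (A, B) ↔ IsTopBlock M A B := fun M A B =>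
    ⟨fun h => by simpa [h] using ht M, fun h => (htu M (A, B) h).symm⟩
  rw [pB_eq_card, Nat.card_eq_fintype_card, Fintype.card_subtype, ← sum_product',
    card_eq_sum_card_fiberwise (f := t)]
  · refine sum_congr rfl fun p hp => ?_
    simp only [mem_product, mem_filter, mem_univ, true_and] at hp
    rw [← card_topBlock p.1 p.2 hp.1 hp.2, Nat.card_eq_fintype_card, Fintype.card_subtype,
      filter_filter]
    simp only [← ht']
  · intro M hM
    simp only [coe_filter, mem_univ, true_and, Set.mem_ofPred_eq] at hM
    simp only [coe_product, coe_filter, mem_univ, true_and, Set.mem_prod, Set.mem_ofPred_eq,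
      mem_Icc]
    exact ⟨⟨card_pos.2 (hM.left_nonempty (ht M)), hM.card_left_le (ht M)⟩,
      card_pos.2 (hM.right_nonempty (ht M)), hM.card_right_le (ht M)⟩

lemma sum_finset_card_mem (n : ℕ) (s : Finset ℕ) (f : ℕ → ℕ) :
    ∑ A : Finset (Fin n) with A.card ∈ s, f A.card = ∑ m ∈ s, n.choose m * f m := by
  rw [← sum_fiberwise_of_maps_to (t := s) (g := card) (by simp)]
  refine sum_congr rfl fun m hm => ?_
  rw [sum_congr rfl (g := fun _ => f m) (by simp +contextual), sum_const, smul_eq_mul,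
    filter_filter]
  congr 1
  have : (univ.filter fun A : Finset (Fin n) => A.card ∈ s ∧ A.card = m) =
      powersetCard m univ := by
    ext A
    simp only [mem_filter, mem_univ, true_and, mem_powersetCard_univ]
    exact ⟨And.right, fun h => ⟨h ▸ hm, h⟩⟩
  rw [this, card_powersetCard, card_univ, Fintype.card_fin]

lemma pB_zero_left {k : ℕ} (hk : 1 ≤ k) (d : ℕ) : pB 0 k d = 0 := by
  rw [pB_eq_card, Nat.card_eq_zero]
  exact Or.inl ⟨fun M => (M.2.col_ne_zero ⟨0, hk⟩).choose.elim0⟩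

lemma pB_zero_right {n : ℕ} (hn : 1 ≤ n) (d : ℕ) : pB n 0 d = 0 := by
  rw [pB_eq_card, Nat.card_eq_zero]
  exact Or.inl ⟨fun M => (M.2.row_ne_zero ⟨0, hn⟩).choose.elim0⟩

/-- The recursion obtained by removing a single block. -/
lemma pB_eq_sum_choose {n k : ℕ} (d : ℕ) (h : 1 ≤ n ∨ 1 ≤ k) :
    pB n k d = ∑ n₁ ∈ Icc 1 d, ∑ k₁ ∈ Icc 1 d,
      n.choose n₁ * (k.choose k₁ * pB (n - n₁) (k - k₁) d) := by
  rcases Nat.eq_zero_or_pos n with rfl | hn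
  · rw [pB_zero_left (by omega), sum_eq_zero]
    intro m hm
    rw [Nat.choose_eq_zero_of_lt (by simp at hm; omega)]
    simp
  rcases Nat.eq_zero_or_pos k with rfl | hk
  · rw [pB_zero_right hn, sum_eq_zero]
    intro m _
    refine sum_eq_zero fun l hl => ?_
    rw [Nat.choose_eq_zero_of_lt (k := l) (by simp at hl; omega)]
    simp
  rw [pB_eq_sum_finset hn hk]
  simp only [← mul_sum]
  rw [← sum_finset_card_mem n _ fun a => ∑ k₁ ∈ Icc 1 d, k.choose k₁ * pB (n - a) (k - k₁) d]
  refine sum_congr rfl fun A _ => ?_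
  exact sum_finset_card_mem k _ fun b => pB (n - A.card) (k - b) d

/-- The recursion for restricted lonesum matrices: for `n, k ≥ 1` with
`n > d` or `k > d`,
`pB(n,k)_{≤d} = ∑ C(n;n₁,n₂)·C(k;k₁,k₂)·pB(n−(n₁+n₂),k−(k₁+k₂))_{≤d}`,
the sum being over `n₁,n₂,k₁,k₂ ∈ {1,…,d}`; here the multinomial coefficient
`C(n;n₁,n₂) = n!/(n₁!n₂!(n−n₁−n₂)!)` is expressed as
`C(n,n₁)·C(n−n₁,n₂)`, which also vanishes when `n₁+n₂ > n`. -/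
theorem pB_recursion (n k d : ℕ) (hn : 1 ≤ n) (hk : 1 ≤ k) (hd : 1 ≤ d)
    (h : d < n ∨ d < k) :
    pB n k d =
      ∑ n₁ ∈ Finset.Icc 1 d, ∑ n₂ ∈ Finset.Icc 1 d,
        ∑ k₁ ∈ Finset.Icc 1 d, ∑ k₂ ∈ Finset.Icc 1 d,
          (Nat.choose n n₁ * Nat.choose (n - n₁) n₂) *
            (Nat.choose k k₁ * Nat.choose (k - k₁) k₂) *
              pB (n - (n₁ + n₂)) (k - (k₁ + k₂)) d := by
  rw [pB_eq_sum_choose d (Or.inl hn)]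
  refine sum_congr rfl fun n₁ hn₁ => ?_
  rw [sum_comm' (s' := fun _ => Icc 1 d) (t' := Icc 1 d) (by simp [and_comm])]
  refine sum_congr rfl fun k₁ hk₁ => ?_
  rw [mem_Icc] at hn₁ hk₁
  rw [pB_eq_sum_choose d (by omega), mul_sum, mul_sum]
  refine sum_congr rfl fun n₂ _ => ?_
  rw [mul_sum, mul_sum]
  refine sum_congr rfl fun k₂ _ => ?_
  rw [Nat.sub_sub, Nat.sub_sub]
  ring
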